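/- Let K be a Kalton–Roberts constant and let Γ be an infinite set. Then: (a) c₀(Γ) has the ω₁-SVM property with constant v for every v > 16K, i.e. for every v > 16K, every countable set algebra F and every 1-additive ν : F → c₀(Γ) there is a vector measure μ : F → c₀(Γ) with ‖ν(A) − μ(A)‖ ≤ v for all A ∈ F; and (b) c₀(Γ) does not have the ω₂-SVM property, i.e. there is no finite constant working for all set algebras of cardinality at most ω₁. In particular the SVM character of c₀(Γ) equals ω₂. -/

import Mathlib

open Cardinal ENNReal

/-- A set algebra: contains `∅`, closed under complements and finite unions. -/
def IsSetAlg {Ω : Type*} (F : Set (Set Ω)) : Prop :=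
  ∅ ∈ F ∧ (∀ A ∈ F, Aᶜ ∈ F) ∧ ∀ A ∈ F, ∀ B ∈ F, A ∪ B ∈ F

/-- `ν` is 1-additive on the set algebra `F`. -/
def OneAdd {Ω X : Type*} [SeminormedAddCommGroup X] (F : Set (Set Ω)) (ν : Set Ω → X) : Prop :=
  ∀ A ∈ F, ∀ B ∈ F, Disjoint A B → ‖ν (A ∪ B) - ν A - ν B‖ ≤ 1

/-- `μ` is a (finitely additive) vector measure on the set algebra `F`. -/
def VectMeas {Ω X : Type*} [AddCommGroup X] (F : Set (Set Ω)) (μ : Set Ω → X) : Prop :=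
  ∀ A ∈ F, ∀ B ∈ F, Disjoint A B → μ (A ∪ B) = μ A + μ B

/-- `K` is a Kalton–Roberts constant. -/
def IsKRConst (K : ℝ) : Prop :=
  ∀ (Ω : Type) (F : Set (Set Ω)), IsSetAlg F →
    ∀ ν : Set Ω → ℝ, OneAdd F ν →
      ∃ μ : Set Ω → ℝ, VectMeas F μ ∧ ∀ A ∈ F, |ν A - μ A| ≤ K

/-- `X` has the SVM property with constant `v` (arbitrary set algebras). -/
def HasSVMBound (X : Type*) [SeminormedAddCommGroup X] (v : ℝ) : Prop :=
  ∀ (Ω : Type) (F : Set (Set Ω)), IsSetAlg F →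
    ∀ ν : Set Ω → X, OneAdd F ν →
      ∃ μ : Set Ω → X, VectMeas F μ ∧ ∀ A ∈ F, ‖ν A - μ A‖ ≤ v

/-- `X` has the ω-SVM property with constant `v` (finite set algebras). -/
def HasOmegaSVMBound (X : Type*) [SeminormedAddCommGroup X] (v : ℝ) : Prop :=
  ∀ (Ω : Type) (F : Set (Set Ω)), IsSetAlg F → F.Finite →
    ∀ ν : Set Ω → X, OneAdd F ν →
      ∃ μ : Set Ω → X, VectMeas F μ ∧ ∀ A ∈ F, ‖ν A - μ A‖ ≤ v

/-- `X` has the κ-SVM property with constant `v` (set algebras of cardinality `< κ`). -/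
def HasKappaSVMBound (X : Type*) [SeminormedAddCommGroup X] (κ : Cardinal) (v : ℝ) : Prop :=
  ∀ (Ω : Type) (F : Set (Set Ω)), IsSetAlg F → #(↥F) < κ →
    ∀ ν : Set Ω → X, OneAdd F ν →
      ∃ μ : Set Ω → X, VectMeas F μ ∧ ∀ A ∈ F, ‖ν A - μ A‖ ≤ v

/-!
The positive part is a correction in the style of Sobczyk's theorem. The coordinates of `ν` are
scalar 1-additive maps, so there are scalar measures `m γ` with `|ν A γ - m γ A| ≤ K`, but
`γ ↦ m γ A` need not vanish at infinity. Since `ν A` does vanish at infinity, the cluster points of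
`m γ` as `γ → ∞` are measures bounded by `K`, and these form a compact set `M`. As `F` is countable,
`ℝ^F` is metrizable, so that nearest points `p γ ∈ M` satisfy `m γ - p γ → 0`; the measure
`A ↦ m · A - p · A` is `c₀(Γ)`-valued and within `2K` of `ν`.

For the negative part, let `A i`, `i : ι`, be `ℵ₁` infinite, pairwise almost disjoint subsets of a
countable subset of `Γ`. On finite sets of indices put `ν E = ∑ i ∈ E, 1_{A i} - 1_{⋃ i ∈ E, A i}`,
which has finite support, and set `ν Eᶜ = -ν E`. If a measure `μ` is within `v` of `ν`, then for
each `x` only finitely many `i` satisfy `x ∈ A i` and `μ {i} x ≤ 1/2`: on `n` such indices `ν` is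
`n - 1` at `x` and `μ` at most `n / 2`. As only countably many `x` matter, some `i` is never met,
and `μ {i} > 1/2` on the infinite set `A i` contradicts `μ {i} ∈ c₀(Γ)`.
-/

open Filter Topology
open scoped ZeroAtInfty

/-! ### Functions vanishing at infinity on a discrete space -/

section ZeroAtInfty

variable {Γ E : Type*} [TopologicalSpace Γ]

lemma norm_apply_le_norm_zeroAtInfty [SeminormedAddCommGroup E] (f : C₀(Γ, E)) (x : Γ) :
    ‖f x‖ ≤ ‖f‖ :=
  f.toBCF.norm_coe_le_norm x

lemma norm_zeroAtInfty_le [SeminormedAddCommGroup E] {f : C₀(Γ, E)} {C : ℝ} (hC : 0 ≤ C)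
    (h : ∀ x, ‖f x‖ ≤ C) : ‖f‖ ≤ C :=
  (BoundedContinuousFunction.norm_le (f := f.toBCF) hC).2 h

variable [DiscreteTopology Γ] [TopologicalSpace E] [Zero E]

lemma tendsto_zeroAtInfty_cofinite (f : C₀(Γ, E)) : Tendsto f cofinite (𝓝 0) :=
  cocompact_eq_cofinite Γ ▸ f.zero_at_infty'

lemma exists_zeroAtInfty_coe_eq {f : Γ → E} (hf : Tendsto f cofinite (𝓝 0)) :
    ∃ g : C₀(Γ, E), ⇑g = f :=
  ⟨⟨⟨f, continuous_of_discreteTopology⟩, (cocompact_eq_cofinite Γ).symm ▸ hf⟩, rfl⟩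

end ZeroAtInfty

/-! ### Nearest points in a compact set -/

section NearestPoint

variable {Γ : Type*} {l : Filter Γ}

lemma exists_forall_mem_tendsto_uniformity {Y : Type*} [UniformSpace Y]
    [IsCountablyGenerated (uniformity Y)] {M : Set Y} (hM : IsCompact M) (hne : M.Nonempty)
    {r : Γ → Y} (hr : Tendsto r l (𝓝ˢ M)) :
    ∃ p : Γ → Y, (∀ γ, p γ ∈ M) ∧ Tendsto (fun γ => (r γ, p γ)) l (uniformity Y) := by
  let _ : PseudoMetricSpace Y := UniformSpace.pseudoMetricSpace Y
  choose p hpM hp using fun γ => hM.exists_infDist_eq_dist hne (r γ)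
  refine ⟨p, hpM, Metric.uniformity_basis_dist.tendsto_right_iff.2 fun ε hε => ?_⟩
  filter_upwards [(Metric.tendsto_nhdsSet hM hne).1 hr ε hε] with γ hγ
  exact (hp γ).symm.trans_lt hγ

lemma exists_forall_mem_tendsto_sub_of_countable {ι : Type*} {s : Set ι} (hs : s.Countable)
    {M : Set (ι → ℝ)} (hM : IsCompact M) (hne : M.Nonempty) {r : Γ → ι → ℝ}
    (hr : Tendsto r l (𝓝ˢ M)) :
    ∃ p : Γ → ι → ℝ, (∀ γ, p γ ∈ M) ∧ ∀ i ∈ s, Tendsto (fun γ => r γ i - p γ i) l (𝓝 0) := by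
  have : Countable s := hs.to_subtype
  have hcont : Continuous (s.domRestrict : (ι → ℝ) → s → ℝ) := Pi.continuous_domRestrict s
  obtain ⟨q, hqM, hq⟩ := exists_forall_mem_tendsto_uniformity (hM.image hcont) (hne.image _)
    ((hcont.tendsto_nhdsSet (Set.mapsTo_image s.domRestrict M)).comp hr)
  choose p hpM hpq using hqM
  refine ⟨p, hpM, fun i hi => ?_⟩
  have hdist := tendsto_uniformity_iff_dist_tendsto_zero.1
    (Tendsto.comp (Pi.uniformContinuous_proj (fun _ : s => ℝ) ⟨i, hi⟩) hq)
  simp only [← hpq] at hdist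
  exact squeeze_zero_norm (fun γ => (dist_eq_norm (r γ i) (p γ i)).ge) hdist

end NearestPoint

/-! ### Bounded measures -/

section BoundedMeasures

variable {Ω : Type*} {F : Set (Set Ω)}

lemma VectMeas.mono {X : Type*} [AddCommGroup X] {G : Set (Set Ω)} {μ : Set Ω → X}
    (hμ : VectMeas G μ) (h : F ⊆ G) : VectMeas F μ :=
  fun A hA B hB => hμ A (h hA) B (h hB)

lemma isClosed_setOf_vectMeas {X : Type*} [TopologicalSpace X] [T2Space X] [AddCommGroup X]
    [ContinuousAdd X] : IsClosed {μ : Set Ω → X | VectMeas F μ} := by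
  simp only [VectMeas, Set.ofPred_forall]
  exact isClosed_iInter fun A => isClosed_iInter fun _ => isClosed_iInter fun B =>
    isClosed_iInter fun _ => isClosed_iInter fun _ => isClosed_eq (by fun_prop) (by fun_prop)

/-- The real measures on `F` bounded by `K`. The bound is also imposed on the (irrelevant) values
outside `F`, which makes this a compact subset of `ℝ^(Set Ω)`. -/
def boundedMeasures (F : Set (Set Ω)) (K : ℝ) : Set (Set Ω → ℝ) :=
  {μ | VectMeas F μ ∧ ∀ A, |μ A| ≤ K}

variable {K : ℝ}

lemma boundedMeasures_nonempty (hK : 0 ≤ K) : (boundedMeasures F K).Nonempty :=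
  ⟨0, fun _ _ _ _ _ => by simp, fun _ => by simpa using hK⟩

lemma isCompact_boundedMeasures : IsCompact (boundedMeasures F K) := by
  have hbox : IsCompact {μ : Set Ω → ℝ | ∀ A, |μ A| ≤ K} := by
    simpa [Set.pi, abs_le] using isCompact_univ_pi fun _ : Set Ω => isCompact_Icc (a := -K) (b := K)
  exact hbox.inter_left isClosed_setOf_vectMeas

lemma tendsto_nhdsSet_boundedMeasures {Γ : Type*} {l : Filter Γ} {n m : Γ → Set Ω → ℝ}
    (hn : Tendsto n l (𝓝 0)) (hm : ∀ γ, VectMeas F (m γ)) (hnm : ∀ γ A, |n γ A - m γ A| ≤ K) :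
    Tendsto m l (𝓝ˢ (boundedMeasures F K)) := by
  refine (tendsto_iff_ultrafilter _ _ _).2 fun g hg => ?_
  have hbox : IsCompact (Set.univ.pi fun _ : Set Ω => Set.Icc (-K) K) :=
    isCompact_univ_pi fun _ => isCompact_Icc
  obtain ⟨d, hdK, hd⟩ := hbox.ultrafilter_le_nhds' (g.map (n - m))
    (Filter.mem_map.2 (univ_mem' fun γ A _ => abs_le.1 (hnm γ A)))
  have hlim : Tendsto m g (𝓝 (-d)) := by
    simpa using (hn.mono_left hg).sub (show Tendsto (n - m) g (𝓝 d) from hd)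
  refine tendsto_nhdsSet_of_tendsto_nhds ⟨?_, fun A => ?_⟩ hlim
  · exact isClosed_setOf_vectMeas.mem_of_tendsto hlim (Eventually.of_forall hm)
  · simpa using abs_le.2 (hdK A trivial)

end BoundedMeasures

/-! ### Countable algebras -/

section Countable

variable {K : ℝ}

lemma IsKRConst.nonneg (hK : IsKRConst K) : 0 ≤ K := by
  obtain ⟨μ, -, hμ⟩ := hK Unit Set.univ ⟨trivial, fun _ _ => trivial, fun _ _ _ _ => trivial⟩ 0
    (fun _ _ _ _ _ => by simp)
  exact (abs_nonneg _).trans (hμ ∅ trivial)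

lemma IsKRConst.exists_vectMeas_forall_abs_sub_le (hK : IsKRConst K) {Ω : Type}
    {F : Set (Set Ω)} (hF : IsSetAlg F) {ν : Set Ω → ℝ} (hν : OneAdd F ν) :
    ∃ μ : Set Ω → ℝ, VectMeas F μ ∧ ∀ A, |ν A - μ A| ≤ K := by
  classical
  obtain ⟨μ, hμ, hμK⟩ := hK Ω F hF ν hν
  refine ⟨fun A => if A ∈ F then μ A else ν A, fun A hA B hB hAB => ?_, fun A => ?_⟩
  · simpa only [if_pos hA, if_pos hB, if_pos (hF.2.2 A hA B hB)] using hμ A hA B hB hAB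
  · by_cases hA : A ∈ F
    · simpa only [if_pos hA] using hμK A hA
    · simpa only [if_neg hA, sub_self, abs_zero] using hK.nonneg

lemma IsKRConst.exists_vectMeas_zeroAtInfty (hK : IsKRConst K) {Γ : Type*} [TopologicalSpace Γ]
    [DiscreteTopology Γ] {Ω : Type} {F : Set (Set Ω)} (hF : IsSetAlg F) (hFc : F.Countable)
    {ν : Set Ω → C₀(Γ, ℝ)} (hν : OneAdd F ν) :
    ∃ μ : Set Ω → C₀(Γ, ℝ), VectMeas F μ ∧ ∀ A ∈ F, ‖ν A - μ A‖ ≤ 2 * K := by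
  have hcoord (γ : Γ) : OneAdd F fun A => ν A γ := fun A hA B hB hAB =>
    (norm_apply_le_norm_zeroAtInfty (ν (A ∪ B) - ν A - ν B) γ).trans (hν A hA B hB hAB)
  choose m hm hmK using fun γ => hK.exists_vectMeas_forall_abs_sub_le hF (hcoord γ)
  have hν0 : Tendsto (fun γ A => ν A γ) cofinite (𝓝 0) :=
    tendsto_pi_nhds.2 fun A => tendsto_zeroAtInfty_cofinite (ν A)
  obtain ⟨p, hp, hmp⟩ := exists_forall_mem_tendsto_sub_of_countable hFc isCompact_boundedMeasures
    (boundedMeasures_nonempty hK.nonneg) (tendsto_nhdsSet_boundedMeasures hν0 hm hmK)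
  choose! μ hμ using fun A hA => exists_zeroAtInfty_coe_eq (hmp A hA)
  refine ⟨μ, fun A hA B hB hAB => ?_, fun A hA => ?_⟩
  · ext γ
    simp only [ZeroAtInftyContinuousMap.add_apply, hμ _ hA, hμ _ hB, hμ _ (hF.2.2 A hA B hB),
      hm γ A hA B hB hAB, (hp γ).1 A hA B hB hAB]
    ring
  · refine norm_zeroAtInfty_le (by linarith [hK.nonneg]) fun γ => ?_
    calc ‖(ν A - μ A) γ‖ = |(ν A γ - m γ A) + p γ A| := by
          rw [ZeroAtInftyContinuousMap.sub_apply, hμ A hA, Real.norm_eq_abs, sub_add]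
      _ ≤ |ν A γ - m γ A| + |p γ A| := abs_add_le _ _
      _ ≤ 2 * K := by linarith [hmK γ A, (hp γ).2 A]

lemma IsKRConst.hasKappaSVMBound_aleph_one (hK : IsKRConst K) (Γ : Type*) [TopologicalSpace Γ]
    [DiscreteTopology Γ] : HasKappaSVMBound C₀(Γ, ℝ) ℵ₁ (2 * K) :=
  fun _ _ hF hcard _ hν =>
    hK.exists_vectMeas_zeroAtInfty hF
      (le_aleph0_iff_set_countable.1 (lt_aleph_one_iff.1 hcard)) hν

end Countable

lemma HasKappaSVMBound.mono {X : Type*} [SeminormedAddCommGroup X] {κ κ' : Cardinal} {v v' : ℝ}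
    (h : HasKappaSVMBound X κ v) (hκ : κ' ≤ κ) (hv : v ≤ v') : HasKappaSVMBound X κ' v' := by
  intro Ω F hF hcard ν hν
  obtain ⟨μ, hμ, hμv⟩ := h Ω F hF (hcard.trans_le hκ) ν hν
  exact ⟨μ, hμ, fun A hA => (hμv A hA).trans hv⟩

/-! ### Almost disjoint families -/

section AlmostDisjoint

variable {ι Γ : Type*}

/-- A family of infinite sets any two of which have finite intersection. -/
structure IsAlmostDisjointFamily (A : ι → Set Γ) : Prop where
  infinite (i : ι) : (A i).Infinite
  finite_inter {i j : ι} (hij : i ≠ j) : (A i ∩ A j).Finite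

lemma IsAlmostDisjointFamily.comp_injective {κ : Type*} {A : ι → Set Γ}
    (hA : IsAlmostDisjointFamily A) {f : κ → ι} (hf : f.Injective) :
    IsAlmostDisjointFamily (A ∘ f) :=
  ⟨fun k => hA.infinite (f k), fun hkl => hA.finite_inter (hf.ne hkl)⟩

lemma IsAlmostDisjointFamily.image {Δ : Type*} {A : ι → Set Γ} (hA : IsAlmostDisjointFamily A)
    {e : Γ → Δ} (he : e.Injective) : IsAlmostDisjointFamily fun i => e '' A i where
  infinite i := (hA.infinite i).image he.injOn
  finite_inter hij := by simpa only [← Set.image_inter he] using (hA.finite_inter hij).image e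

lemma isAlmostDisjointFamily_range_res (α : Type*) :
    IsAlmostDisjointFamily fun y : ℕ → α => Set.range (PiNat.res y) where
  infinite y := Set.infinite_range_of_injective fun k l hkl => by
    simpa only [PiNat.res_length] using congrArg List.length hkl
  finite_inter {y z} hyz := by
    obtain ⟨n, hn⟩ := Function.ne_iff.1 hyz
    refine ((Set.finite_le_nat n).image (PiNat.res y)).subset ?_
    rintro _ ⟨⟨k, rfl⟩, l, hlk⟩
    obtain rfl : l = k := by simpa only [PiNat.res_length] using congrArg List.length hlk
    exact ⟨l, not_lt.1 fun hnl => hn (PiNat.res_eq_res.1 hlk hnl).symm, rfl⟩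

lemma exists_isAlmostDisjointFamily_of_mk_le_continuum [Infinite Γ] (hι : #ι ≤ 𝔠) :
    ∃ A : ι → Set Γ, IsAlmostDisjointFamily A ∧ (⋃ i, A i).Countable := by
  obtain ⟨x⟩ : Nonempty (ι ↪ (ℕ → Bool)) := by
    rw [← lift_mk_le']
    simpa using hι
  obtain ⟨e⟩ : Nonempty (List Bool ↪ Γ) :=
    ⟨.trans ⟨Encodable.encode, Encodable.encode_injective⟩ (Infinite.natEmbedding Γ)⟩
  refine ⟨_, ((isAlmostDisjointFamily_range_res Bool).image e.injective).comp_injective x.injective,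
    (Set.countable_range e).mono ?_⟩
  exact Set.iUnion_subset fun i => Set.image_subset_range e _

end AlmostDisjoint

/-! ### The finite-cofinite algebra -/

section FinCofin

variable {ι : Type*}

/-- The algebra of the finite and the cofinite subsets of `ι`. -/
def finCofin (ι : Type*) : Set (Set ι) := {E | E.Finite ∨ Eᶜ.Finite}

lemma setOf_finite_subset_finCofin : {E : Set ι | E.Finite} ⊆ finCofin ι := fun _ => Or.inl

lemma isSetAlg_finCofin : IsSetAlg (finCofin ι) := by
  refine ⟨Or.inl Set.finite_empty, fun A hA => ?_, fun A hA B hB => ?_⟩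
  · rwa [finCofin, Set.mem_ofPred_eq, compl_compl, or_comm]
  · rcases hA with hA | hA
    · rcases hB with hB | hB
      · exact Or.inl (hA.union hB)
      · exact Or.inr (hB.subset (Set.compl_subset_compl.2 Set.subset_union_right))
    · exact Or.inr (hA.subset (Set.compl_subset_compl.2 Set.subset_union_left))

lemma mk_finCofin_le [Infinite ι] : #(finCofin ι) ≤ #ι := by
  have hsub : finCofin ι ⊆
      Set.range ((↑) : Finset ι → Set ι) ∪ Set.range fun E : Finset ι => (E : Set ι)ᶜ := by
    rintro E (hE | hE)
    · exact Or.inl ⟨hE.toFinset, hE.coe_toFinset⟩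
    · exact Or.inr ⟨hE.toFinset, by simp only [hE.coe_toFinset, compl_compl]⟩
  calc #(finCofin ι) ≤ #(Finset ι) + #(Finset ι) :=
        (mk_le_mk_of_subset hsub).trans <| (mk_union_le _ _).trans <|
          add_le_add mk_range_le mk_range_le
    _ = #ι := by rw [mk_finset_of_infinite, add_eq_self (aleph0_le_mk ι)]

variable {X : Type*}

open Classical in
/-- The extension of a function of finite sets to the finite-cofinite algebra of an infinite set
that is odd under complementation; its values at other sets are irrelevant. -/
noncomputable def finCofinExtend [Neg X] (g : Set ι → X) (E : Set ι) : X :=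
  if E.Finite then g E else -g Eᶜ

lemma finCofinExtend_of_finite [Neg X] (g : Set ι → X) {E : Set ι} (hE : E.Finite) :
    finCofinExtend g E = g E :=
  if_pos hE

lemma finCofinExtend_of_infinite [Neg X] (g : Set ι → X) {E : Set ι} (hE : E.Infinite) :
    finCofinExtend g E = -g Eᶜ :=
  if_neg hE

variable [SeminormedAddCommGroup X]

lemma norm_finCofinExtend_union_sub_le_of_infinite {g : Set ι → X}
    (hg : OneAdd {E | E.Finite} g) {E G : Set ι} (hE : E.Finite) (hG : G.Infinite)
    (hGc : Gᶜ.Finite) (hEG : Disjoint E G) :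
    ‖finCofinExtend g (E ∪ G) - finCofinExtend g E - finCofinExtend g G‖ ≤ 1 := by
  rw [finCofinExtend_of_finite g hE, finCofinExtend_of_infinite g hG,
    finCofinExtend_of_infinite g (hG.mono Set.subset_union_right)]
  have hunion : E ∪ (E ∪ G)ᶜ = Gᶜ := by
    rw [Set.compl_union, ← Set.sdiff_eq_compl_inter, Set.union_sdiff_cancel]
    exact Set.disjoint_left.1 hEG
  have hsplit := hg E hE (E ∪ G)ᶜ
    (hGc.subset (Set.compl_subset_compl.2 Set.subset_union_right))
    (disjoint_compl_right.mono_left Set.subset_union_left)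
  rw [hunion] at hsplit
  convert hsplit using 2
  abel

lemma oneAdd_finCofinExtend [Infinite ι] {g : Set ι → X} (hg : OneAdd {E | E.Finite} g) :
    OneAdd (finCofin ι) (finCofinExtend g) := by
  intro E hE G hG hEG
  by_cases hEfin : E.Finite
  · by_cases hGfin : G.Finite
    · rw [finCofinExtend_of_finite g hEfin, finCofinExtend_of_finite g hGfin,
        finCofinExtend_of_finite g (hEfin.union hGfin)]
      exact hg E hEfin G hGfin hEG
    · exact norm_finCofinExtend_union_sub_le_of_infinite hg hEfin hGfin
        (hG.resolve_left hGfin) hEG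
  · have hEc := hE.resolve_left hEfin
    have hGfin : G.Finite := hEc.subset (Set.disjoint_left.1 hEG.symm)
    rw [Set.union_comm, sub_right_comm]
    exact norm_finCofinExtend_union_sub_le_of_infinite hg hGfin hEfin hEc hEG.symm

end FinCofin

lemma VectMeas.coe_finset_eq_sum {ι X : Type*} [AddCommGroup X] {μ : Set ι → X}
    (hμ : VectMeas {E | E.Finite} μ) (E : Finset ι) : μ E = ∑ i ∈ E, μ {i} := by
  classical
  induction E using Finset.induction_on with
  | empty => simpa using hμ ∅ Set.finite_empty ∅ Set.finite_empty (Set.disjoint_empty _)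
  | insert i E hi ih =>
    rw [Finset.sum_insert hi, ← ih, Finset.coe_insert, Set.insert_eq]
    exact hμ {i} (Set.finite_singleton i) E E.finite_toSet (by simpa using hi)

/-! ### The overlap of a family -/

section Overlap

variable {ι Γ : Type*} {A : ι → Set Γ}

/-- The value at `x` of `∑ i ∈ E, 1_{A i} - 1_{⋃ i ∈ E, A i}` for finite `E`. The truncated
subtraction takes care of the points outside the union. -/
noncomputable def overlap (A : ι → Set Γ) (E : Set ι) (x : Γ) : ℕ :=
  {i ∈ E | x ∈ A i}.ncard - 1

lemma finite_setOf_overlap_ne_zero (hA : IsAlmostDisjointFamily A) {E : Set ι} (hE : E.Finite) :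
    {x | overlap A E x ≠ 0}.Finite := by
  refine (hE.offDiag.biUnion (t := fun q => A q.1 ∩ A q.2)
    fun q hq => hA.finite_inter hq.2.2).subset fun x hx => ?_
  obtain ⟨i, j, hi, hj, hij⟩ :=
    (Set.one_lt_ncard_iff (hE.sep _)).1 (Nat.lt_of_sub_ne_zero hx)
  exact Set.mem_biUnion (x := (i, j)) ⟨hi.1, hj.1, hij⟩ ⟨hi.2, hj.2⟩

lemma oneAdd_overlap (A : ι → Set Γ) (x : Γ) :
    OneAdd {E | E.Finite} fun E => (overlap A E x : ℝ) := by
  intro E hE G hG hEG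
  have hcard : {i ∈ E ∪ G | x ∈ A i}.ncard = {i ∈ E | x ∈ A i}.ncard + {i ∈ G | x ∈ A i}.ncard := by
    rw [← Set.ncard_union_eq (hEG.mono (Set.sep_subset _ _) (Set.sep_subset _ _))
      (hE.sep _) (hG.sep _)]
    congr 1
    ext i
    exact or_and_right
  have hlower : overlap A E x + overlap A G x ≤ overlap A (E ∪ G) x := by
    unfold overlap
    omega
  have hupper : overlap A (E ∪ G) x ≤ overlap A E x + overlap A G x + 1 := by
    unfold overlap
    omega
  rify at hlower hupper
  rw [Real.norm_eq_abs, abs_le]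
  constructor <;> linarith

lemma finite_setOf_mem_and_le_half {x : Γ} {m : Set ι → ℝ} {v : ℝ}
    (hm : VectMeas {E | E.Finite} m) (hv : ∀ E, E.Finite → |overlap A E x - m E| ≤ v) :
    {i | x ∈ A i ∧ m {i} ≤ 1 / 2}.Finite := by
  by_contra hinf
  obtain ⟨n, hn⟩ := exists_nat_gt (2 * (1 + v))
  obtain ⟨E, hE, rfl⟩ := Set.Infinite.exists_subset_card_eq hinf n
  have hoverlap : (E.card : ℝ) - 1 ≤ overlap A E x := by
    have hsep : {i ∈ (E : Set ι) | x ∈ A i} = E :=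
      Set.sep_eq_self_iff_mem_true.2 fun i hi => (hE hi).1
    rw [overlap, hsep, Set.ncard_coe_finset, sub_le_iff_le_add]
    exact_mod_cast le_tsub_add
  have hmE : m E ≤ E.card * (1 / 2) := by
    rw [hm.coe_finset_eq_sum, ← nsmul_eq_mul]
    exact Finset.sum_le_card_nsmul E _ _ fun i hi => (hE hi).2
  linarith [(abs_le.1 (hv E E.finite_toSet)).2]

lemma exists_forall_mem_half_lt [Uncountable ι] (hA : (⋃ i, A i).Countable)
    {m : Γ → Set ι → ℝ} {v : ℝ} (hm : ∀ x, VectMeas {E | E.Finite} (m x))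
    (hv : ∀ x E, E.Finite → |overlap A E x - m x E| ≤ v) :
    ∃ i, ∀ x ∈ A i, 1 / 2 < m x {i} := by
  have hexc : (⋃ x ∈ ⋃ i, A i, {i | x ∈ A i ∧ m x {i} ≤ 1 / 2}).Countable :=
    hA.biUnion fun x _ => (finite_setOf_mem_and_le_half (hm x) (hv x)).countable
  by_contra! hall
  refine Set.not_countable_univ (hexc.mono fun i _ => ?_)
  obtain ⟨x, hx, hle⟩ := hall i
  exact Set.mem_biUnion (Set.mem_iUnion_of_mem i hx) ⟨hx, hle⟩

variable [TopologicalSpace Γ] [DiscreteTopology Γ]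

lemma exists_oneAdd_finCofin_eq_overlap [Infinite ι] (hA : IsAlmostDisjointFamily A) :
    ∃ ν : Set ι → C₀(Γ, ℝ), OneAdd (finCofin ι) ν ∧
      ∀ E, E.Finite → ∀ x, ν E x = overlap A E x := by
  have hlim (E : Set ι) (hE : E.Finite) :
      Tendsto (fun x => (overlap A E x : ℝ)) cofinite (𝓝 0) := by
    refine tendsto_const_nhds.congr' ?_
    filter_upwards [(finite_setOf_overlap_ne_zero hA hE).compl_mem_cofinite] with x hx
    simpa [eq_comm] using hx
  choose! g hg using fun E hE => exists_zeroAtInfty_coe_eq (hlim E hE)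
  have hgadd : OneAdd {E | E.Finite} g := fun E hE G hG hEG =>
    norm_zeroAtInfty_le zero_le_one fun x => by
      simpa [hg E hE, hg G hG, hg _ (hE.union hG)] using oneAdd_overlap A x E hE G hG hEG
  refine ⟨finCofinExtend g, oneAdd_finCofinExtend hgadd, fun E hE x => ?_⟩
  rw [finCofinExtend_of_finite g hE, hg E hE]

lemma not_exists_vectMeas_near_overlap [Uncountable ι] (hA : IsAlmostDisjointFamily A)
    (hAc : (⋃ i, A i).Countable) {ν : Set ι → C₀(Γ, ℝ)}
    (hν : ∀ E, E.Finite → ∀ x, ν E x = overlap A E x) (v : ℝ) :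
    ¬ ∃ μ : Set ι → C₀(Γ, ℝ), VectMeas {E | E.Finite} μ ∧ ∀ E, E.Finite → ‖ν E - μ E‖ ≤ v := by
  rintro ⟨μ, hμ, hμv⟩
  obtain ⟨i, hi⟩ := exists_forall_mem_half_lt hAc (m := fun x E => μ E x) (v := v)
    (fun x E hE G hG hEG => DFunLike.congr_fun (hμ E hE G hG hEG) x) fun x E hE => by
      rw [← hν E hE]
      exact (norm_apply_le_norm_zeroAtInfty (ν E - μ E) x).trans (hμv E hE)
  have hsmall : ∀ᶠ x in cofinite, μ {i} x < 1 / 2 :=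
    (tendsto_zeroAtInfty_cofinite (μ {i})).eventually_lt_const one_half_pos
  obtain ⟨x, hxA, hx⟩ :=
    ((frequently_cofinite_iff_infinite.2 (hA.infinite i)).and_eventually hsmall).exists
  exact (hi x hxA).not_gt hx

end Overlap

lemma not_hasKappaSVMBound_of_isAlmostDisjointFamily {ι : Type} {Γ : Type*} [TopologicalSpace Γ]
    [DiscreteTopology Γ] [Uncountable ι] {A : ι → Set Γ} (hA : IsAlmostDisjointFamily A)
    (hAc : (⋃ i, A i).Countable) {κ : Cardinal} (hκ : #ι < κ) (v : ℝ) :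
    ¬ HasKappaSVMBound C₀(Γ, ℝ) κ v := by
  intro h
  obtain ⟨ν, hν, hνA⟩ := exists_oneAdd_finCofin_eq_overlap hA
  obtain ⟨μ, hμ, hμv⟩ := h ι (finCofin ι) isSetAlg_finCofin (mk_finCofin_le.trans_lt hκ) ν hν
  exact not_exists_vectMeas_near_overlap hA hAc hνA v
    ⟨μ, hμ.mono setOf_finite_subset_finCofin, fun E hE => hμv E (Or.inl hE)⟩

lemma aleph_two_eq_succ_aleph_one : ℵ_ 2 = Order.succ ℵ₁ := by
  rw [succ_aleph, one_add_one_eq_two]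

lemma not_hasKappaSVMBound_aleph_two (Γ : Type*) [TopologicalSpace Γ] [DiscreteTopology Γ]
    [Infinite Γ] (v : ℝ) : ¬ HasKappaSVMBound C₀(Γ, ℝ) (ℵ_ 2) v := by
  have hmk : #(ℵ₁ : Cardinal.{0}).out = ℵ₁ := mk_out _
  have : Uncountable (ℵ₁ : Cardinal.{0}).out := by
    rw [← aleph0_lt_mk_iff, hmk]
    exact aleph0_lt_aleph_one
  obtain ⟨A, hA, hAc⟩ := exists_isAlmostDisjointFamily_of_mk_le_continuum (Γ := Γ)
    (hmk.trans_le aleph_one_le_continuum)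
  refine not_hasKappaSVMBound_of_isAlmostDisjointFamily hA hAc ?_ v
  rw [hmk, aleph_two_eq_succ_aleph_one]
  exact Order.lt_succ _

theorem stmt_15_general {K : ℝ} (hK : IsKRConst K)
    (Γ : Type*) [TopologicalSpace Γ] [DiscreteTopology Γ] [Infinite Γ] :
    (∀ v : ℝ, 2 * K ≤ v →
      ∀ (Ω : Type) (F : Set (Set Ω)), IsSetAlg F → F.Countable →
        ∀ ν : Set Ω → C₀(Γ, ℝ), OneAdd F ν →
          ∃ μ : Set Ω → C₀(Γ, ℝ), VectMeas F μ ∧ ∀ A ∈ F, ‖ν A - μ A‖ ≤ v) ∧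
    (¬ ∃ v : ℝ, HasKappaSVMBound C₀(Γ, ℝ) (ℵ_ 2) v) ∧
    (∀ κ : Cardinal, κ < ℵ_ 2 → ∃ v : ℝ, HasKappaSVMBound C₀(Γ, ℝ) κ v) := by
  have hpos : HasKappaSVMBound C₀(Γ, ℝ) ℵ₁ (2 * K) := hK.hasKappaSVMBound_aleph_one Γ
  refine ⟨fun v hv Ω F hF hFc => ?_, ?_, fun κ hκ => ⟨2 * K, hpos.mono ?_ le_rfl⟩⟩
  · exact hpos.mono le_rfl hv Ω F hF (lt_aleph_one_iff.2 (le_aleph0_iff_set_countable.2 hFc))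
  · exact not_exists.2 (not_hasKappaSVMBound_aleph_two Γ)
  · rwa [aleph_two_eq_succ_aleph_one, Order.lt_succ_iff] at hκ

/-- for an infinite set Γ, c₀(Γ) has the ω₁-SVM property with any
constant v > 16K, fails the ω₂-SVM property, and its SVM character equals ω₂. -/
theorem stmt_15 (K : ℝ) (hK : IsKRConst K)
    (Γ : Type) [TopologicalSpace Γ] [DiscreteTopology Γ] [Infinite Γ] :
    (∀ v : ℝ, 16 * K < v →
      ∀ (Ω : Type) (F : Set (Set Ω)), IsSetAlg F → F.Countable →
        ∀ ν : Set Ω → ZeroAtInftyContinuousMap Γ ℝ, OneAdd F ν →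
          ∃ μ : Set Ω → ZeroAtInftyContinuousMap Γ ℝ,
            VectMeas F μ ∧ ∀ A ∈ F, ‖ν A - μ A‖ ≤ v) ∧
    (¬ ∃ v : ℝ, HasKappaSVMBound (ZeroAtInftyContinuousMap Γ ℝ) (Cardinal.aleph 2) v) ∧
    (∀ κ : Cardinal, κ < Cardinal.aleph 2 →
      ∃ v : ℝ, HasKappaSVMBound (ZeroAtInftyContinuousMap Γ ℝ) κ v) := by
  obtain ⟨hcountable, hfail, hbelow⟩ := stmt_15_general hK Γ
  exact ⟨fun v hv => hcountable v (by linarith [hK.nonneg]), hfail, hbelow⟩
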